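/- Let ω = i g_{k̄j} dz^j∧dz̄^k be a Hermitian metric on a complex manifold of dimension n ≥ 3, with torsion T = i∂ω, T̄ = −i∂̄ω, torsion one-form τ, and norms |T|², |τ|². Then T ∧ T̄ ∧ ω^{n-3} = (i/2)·(1/(n(n−1)(n−2)))·(|T|² − 2|τ|²)·ω^n. Moreover, the full traces of the (3,3)-form T∧T̄ satisfy g^{jk̄} g^{qp̄} g^{sr̄} (T∧T̄)_{p̄qr̄sk̄j} = 3(|T|² − 2|τ|²). -/

import Mathlib

/-!
Everything is pointwise exterior algebra.  Write `ω = iΩ` with `Ω = g_{k̄j} dz^j ∧ dz̄^k`.  In the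
coframe `θ_a = g_{āj} dz^j` one has `Ω = Σ_a θ_a ∧ dz̄^a`, a sum of `n` commuting square-zero forms, so
`Ω^{n+1} = 0` (`rawOmega_pow_succ_eq_zero`).  Contraction with a vector `D` is an antiderivation, and
`D⌋Ω^{m+1} = (m+1) (D⌋Ω) ∧ Ω^m`.

* Vectors with `D⌋Ω = -dz^a` turn `Ω^{n+1} = 0` successively into `dz^a ∧ Ω^n = 0`,
  `dz^a ∧ dz^b ∧ Ω^{n-1} = 0` and `dz^a ∧ dz^b ∧ dz^c ∧ Ω^{n-2} = 0`.
* Vectors with `D⌋Ω = dz̄^k` satisfy `D⌋dz^a = g^{ak̄}`.  Contracting the three vanishing forms with them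
  gives `trace_one`, `trace_two`, `trace_three`, each of which trades one `dz̄^k` against one power
  of `Ω`.  Together they show that `n(n-1)(n-2)` times a basic `(3,3)`-form wedged with `Ω^{n-3}` is
  the determinant of the `3 × 3` matrix of inverse metric entries times `Ω^n` (`trace_full`).

No orthonormal frame is needed.  Contracting the coefficients `¼ T_{k̄jℓ} T̄_{mīp̄}` with that
determinant and using the antisymmetry of the torsion, two of its six terms give `|T|²` and four give
`-|τ|²` (`sum_full_contraction`), so the coefficient of `Ω^n` is `½ (|T|² - 2|τ|²)`.

The trace of the components is the same bookkeeping: up to permuting the three contracted index pairs,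
the nine terms of `(T∧T̄)_{p̄qr̄sk̄j}` are three copies of `|T|²` and six of `-|τ|²`
(`sum_trace_components`).
-/


open scoped BigOperators

/-!
Local holomorphic coordinates: a chart of an `n`-dimensional complex manifold is an open
set of `ℂ^n = Fin n → ℂ`.  A Hermitian metric is given there by its components
`g k j = g_{k̄j}`, `ω = i g_{k̄j} dz^j ∧ dz̄^k`, and all curvature and torsion tensors of
the Chern connection are expressed through the Wirtinger derivatives `∂_j`, `∂_{j̄}`.
-/

/-- The Wirtinger derivative `∂_j F = ½(∂_{x_j} − i ∂_{y_j})F`. -/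
noncomputable def wirt {n : ℕ} (j : Fin n) (F : (Fin n → ℂ) → ℂ) (z : Fin n → ℂ) : ℂ :=
  (fderiv ℝ F z (Pi.single j 1) - Complex.I * fderiv ℝ F z (Pi.single j Complex.I)) / 2

/-- The conjugate Wirtinger derivative `∂_{j̄} F = ½(∂_{x_j} + i ∂_{y_j})F`. -/
noncomputable def wirtBar {n : ℕ} (j : Fin n) (F : (Fin n → ℂ) → ℂ) (z : Fin n → ℂ) : ℂ :=
  (fderiv ℝ F z (Pi.single j 1) + Complex.I * fderiv ℝ F z (Pi.single j Complex.I)) / 2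

/-- The components `T_{k̄jℓ} = ∂_j g_{k̄ℓ} − ∂_ℓ g_{k̄j}` of the torsion `T = i∂ω`. -/
noncomputable def torsion {n : ℕ} (g : Fin n → Fin n → (Fin n → ℂ) → ℂ)
    (k j l : Fin n) (z : Fin n → ℂ) : ℂ :=
  wirt j (g k l) z - wirt l (g k j) z

/-- The components `T̄_{kj̄ℓ̄} = conj T_{k̄jℓ}` of `T̄ = −i∂̄ω`. -/
noncomputable def torsionBar {n : ℕ} (g : Fin n → Fin n → (Fin n → ℂ) → ℂ)
    (k j l : Fin n) (z : Fin n → ℂ) : ℂ :=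
  starRingEnd ℂ (torsion g k j l z)

/-- The components `T_ℓ = g^{jk̄} T_{k̄jℓ}` of the torsion one-form `τ`. -/
noncomputable def tau {n : ℕ} (g ginv : Fin n → Fin n → (Fin n → ℂ) → ℂ)
    (l : Fin n) (z : Fin n → ℂ) : ℂ :=
  ∑ j : Fin n, ∑ k : Fin n, ginv j k z * torsion g k j l z

/-- The curvature `R_{k̄j}{}^p{}_q = −∂_{k̄}(g^{pℓ̄} ∂_j g_{ℓ̄q})` of the Chern
connection; here `ginv p l = g^{pl̄}` is the inverse metric. -/
noncomputable def curv {n : ℕ} (g ginv : Fin n → Fin n → (Fin n → ℂ) → ℂ)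
    (k j p q : Fin n) (z : Fin n → ℂ) : ℂ :=
  - wirtBar k (fun w => ∑ l : Fin n, ginv p l w * wirt j (g l q) w) z

/-- The fully lowered curvature tensor `R_{k̄jℓ̄m} = g_{ℓ̄p} R_{k̄j}{}^p{}_m`. -/
noncomputable def curvLow {n : ℕ} (g ginv : Fin n → Fin n → (Fin n → ℂ) → ℂ)
    (k j l m : Fin n) (z : Fin n → ℂ) : ℂ :=
  ∑ p : Fin n, g l p z * curv g ginv k j p m z

/-- The (first) Chern-Ricci curvature `R_{k̄j} = R_{k̄j}{}^p{}_p = g^{mℓ̄} R_{k̄jℓ̄m}`. -/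
noncomputable def ricci {n : ℕ} (g ginv : Fin n → Fin n → (Fin n → ℂ) → ℂ)
    (k j : Fin n) (z : Fin n → ℂ) : ℂ :=
  ∑ l : Fin n, ∑ m : Fin n, ginv m l z * curvLow g ginv k j l m z

/-- The second Chern-Ricci curvature `R̃_{ℓ̄m} = R^p{}_{pℓ̄m} = g^{jk̄} R_{k̄jℓ̄m}`. -/
noncomputable def ricciTilde {n : ℕ} (g ginv : Fin n → Fin n → (Fin n → ℂ) → ℂ)
    (l m : Fin n) (z : Fin n → ℂ) : ℂ :=
  ∑ j : Fin n, ∑ k : Fin n, ginv j k z * curvLow g ginv k j l m z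

/-- The third Chern-Ricci curvature `R'_{k̄j} = R_{k̄}{}^p{}_{pj} = g^{mℓ̄} R_{k̄mℓ̄j}`. -/
noncomputable def ricci' {n : ℕ} (g ginv : Fin n → Fin n → (Fin n → ℂ) → ℂ)
    (k j : Fin n) (z : Fin n → ℂ) : ℂ :=
  ∑ l : Fin n, ∑ m : Fin n, ginv m l z * curvLow g ginv k m l j z

/-- The fourth Chern-Ricci curvature `R''_{k̄j} = R^p{}_{jk̄p} = g^{mℓ̄} R_{ℓ̄jk̄m}`. -/
noncomputable def ricci'' {n : ℕ} (g ginv : Fin n → Fin n → (Fin n → ℂ) → ℂ)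
    (k j : Fin n) (z : Fin n → ℂ) : ℂ :=
  ∑ l : Fin n, ∑ m : Fin n, ginv m l z * curvLow g ginv l j k m z

/-- The components
`(i∂∂̄ω)_{k̄jℓ̄m} = ∂_{ℓ̄}∂_j g_{k̄m} − ∂_{ℓ̄}∂_m g_{k̄j} − ∂_{k̄}∂_j g_{ℓ̄m} + ∂_{k̄}∂_m g_{ℓ̄j}`
of the `(2,2)`-form `i∂∂̄ω`. -/
noncomputable def iddbarOmega {n : ℕ} (g : Fin n → Fin n → (Fin n → ℂ) → ℂ)
    (k j l m : Fin n) (z : Fin n → ℂ) : ℂ :=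
  wirtBar l (fun w => wirt j (g k m) w) z - wirtBar l (fun w => wirt m (g k j) w) z
    - wirtBar k (fun w => wirt j (g l m) w) z + wirtBar k (fun w => wirt m (g l j) w) z

/-- `g` is a (smooth) Hermitian metric in the chart, with inverse metric
`ginv j k = g^{jk̄}`. -/
structure IsHermitianMetric {n : ℕ} (g ginv : Fin n → Fin n → (Fin n → ℂ) → ℂ) : Prop where
  smooth : ∀ k j, ContDiff ℝ (⊤ : ℕ∞) (g k j)
  hermitian : ∀ k j z, starRingEnd ℂ (g k j z) = g j k z
  posdef : ∀ (z : Fin n → ℂ) (v : Fin n → ℂ), v ≠ 0 →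
    0 < (∑ k : Fin n, ∑ j : Fin n, g k j z * v j * starRingEnd ℂ (v k)).re
  inv_left : ∀ z p q, ∑ l : Fin n, ginv p l z * g l q z = if p = q then 1 else 0
  inv_right : ∀ z p q, ∑ l : Fin n, g p l z * ginv l q z = if p = q then 1 else 0

/-!
The exterior algebra of `(p,q)`-forms at a point: `Λ n` is the complex exterior algebra
on the `2n` generators `dz^1,…,dz^n, dz̄^1,…,dz̄^n`, with the wedge product given by the
algebra multiplication.
-/

/-- The algebra of (constant-coefficient) complex differential forms at a point of an
`n`-dimensional complex manifold. -/
abbrev FormAlg (n : ℕ) := ExteriorAlgebra ℂ ((Fin n ⊕ Fin n) → ℂ)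

/-- The generator `dz^j`. -/
noncomputable def dzf {n : ℕ} (j : Fin n) : FormAlg n :=
  ExteriorAlgebra.ι ℂ (Pi.single (Sum.inl j) 1)

/-- The generator `dz̄^k`. -/
noncomputable def dzbf {n : ℕ} (k : Fin n) : FormAlg n :=
  ExteriorAlgebra.ι ℂ (Pi.single (Sum.inr k) 1)

/-- The Kähler form `ω = i g_{k̄j} dz^j ∧ dz̄^k` at the point `z`. -/
noncomputable def omegaForm {n : ℕ} (g : Fin n → Fin n → (Fin n → ℂ) → ℂ)
    (z : Fin n → ℂ) : FormAlg n :=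
  Complex.I • ∑ j : Fin n, ∑ k : Fin n, g k j z • (dzf j * dzbf k)

/-- The torsion `(2,1)`-form `T = i∂ω = ½ T_{k̄jℓ} dz^ℓ ∧ dz^j ∧ dz̄^k` at `z`. -/
noncomputable def torsionForm {n : ℕ} (g : Fin n → Fin n → (Fin n → ℂ) → ℂ)
    (z : Fin n → ℂ) : FormAlg n :=
  (2 : ℂ)⁻¹ • ∑ k : Fin n, ∑ j : Fin n, ∑ l : Fin n,
    torsion g k j l z • (dzf l * dzf j * dzbf k)

/-- The conjugate torsion `(1,2)`-form `T̄ = −i∂̄ω = ½ T̄_{kj̄ℓ̄} dz̄^ℓ ∧ dz̄^j ∧ dz^k`. -/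
noncomputable def torsionBarForm {n : ℕ} (g : Fin n → Fin n → (Fin n → ℂ) → ℂ)
    (z : Fin n → ℂ) : FormAlg n :=
  (2 : ℂ)⁻¹ • ∑ k : Fin n, ∑ j : Fin n, ∑ l : Fin n,
    torsionBar g k j l z • (dzbf l * dzbf j * dzf k)

/-- The squared torsion norm `|T|² = g^{mk̄} g^{jn̄} g^{ℓp̄} T_{k̄jℓ} T̄_{mn̄p̄}`. -/
noncomputable def torsionNormSq {n : ℕ} (g ginv : Fin n → Fin n → (Fin n → ℂ) → ℂ)
    (z : Fin n → ℂ) : ℂ :=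
  ∑ k : Fin n, ∑ j : Fin n, ∑ l : Fin n, ∑ m : Fin n, ∑ i : Fin n, ∑ p : Fin n,
    ginv m k z * ginv j i z * ginv l p z * torsion g k j l z * torsionBar g m i p z

/-- The squared norm `|τ|² = g^{jk̄} T_j T̄_{k̄}` of the torsion one-form. -/
noncomputable def tauNormSq {n : ℕ} (g ginv : Fin n → Fin n → (Fin n → ℂ) → ℂ)
    (z : Fin n → ℂ) : ℂ :=
  ∑ j : Fin n, ∑ k : Fin n, ginv j k z * tau g ginv j z * starRingEnd ℂ (tau g ginv k z)

/-- The components `(T∧T̄)_{p̄qr̄sk̄j}` of the `(3,3)`-form `T ∧ T̄`, obtained by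
antisymmetrizing `T_{k̄sj} T̄_{qp̄r̄}` in the barred and unbarred indices:
`(T∧T̄)_{p̄qr̄sk̄j} = T_{k̄sj}T̄_{qp̄r̄} + T_{r̄sj}T̄_{qk̄p̄} + T_{p̄sj}T̄_{qr̄k̄} + T_{k̄qs}T̄_{jp̄r̄}`
`+ T_{r̄qs}T̄_{jk̄p̄} + T_{p̄qs}T̄_{jr̄k̄} + T_{k̄jq}T̄_{sp̄r̄} + T_{r̄jq}T̄_{sk̄p̄} + T_{p̄jq}T̄_{sr̄k̄}`. -/
noncomputable def torsionWedgeBar {n : ℕ} (g : Fin n → Fin n → (Fin n → ℂ) → ℂ)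
    (p q r s k j : Fin n) (z : Fin n → ℂ) : ℂ :=
  torsion g k s j z * torsionBar g q p r z + torsion g r s j z * torsionBar g q k p z
    + torsion g p s j z * torsionBar g q r k z + torsion g k q s z * torsionBar g j p r z
    + torsion g r q s z * torsionBar g j k p z + torsion g p q s z * torsionBar g j r k z
    + torsion g k j q z * torsionBar g s p r z + torsion g r j q z * torsionBar g s k p z
    + torsion g p j q z * torsionBar g s r k z

/-- The form `Ω = G_{k̄j} dz^j ∧ dz̄^k`, so that `ω = iΩ` when `G` is the metric at a point. -/
noncomputable def rawOmega {n : ℕ} (G : Fin n → Fin n → ℂ) : FormAlg n :=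
  ∑ j : Fin n, ∑ k : Fin n, G k j • (dzf j * dzbf k)

/-- The functional `dz^j ↦ H^{jk̄}`, `dz̄^j ↦ 0`.  When `H` is the inverse of `G` it is dual to the
coframe `θ_a = G_{āj} dz^j`, in which `Ω = Σ_a θ_a ∧ dz̄^a`. -/
noncomputable def dualHol {n : ℕ} (H : Fin n → Fin n → ℂ) (k : Fin n) :
    Module.Dual ℂ ((Fin n ⊕ Fin n) → ℂ) :=
  ∑ j : Fin n, H j k • LinearMap.proj (Sum.inl j)

/-- The functional `dz^j ↦ 0`, `dz̄^k ↦ H^{lk̄}`. -/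
noncomputable def dualAnti {n : ℕ} (H : Fin n → Fin n → ℂ) (l : Fin n) :
    Module.Dual ℂ ((Fin n ⊕ Fin n) → ℂ) :=
  ∑ k : Fin n, H l k • LinearMap.proj (Sum.inr k)

/-- Contraction (interior product) of forms with a tangent vector `D`, i.e. a functional on
one-forms; it is an antiderivation. -/
noncomputable def contr {n : ℕ} (D : Module.Dual ℂ ((Fin n ⊕ Fin n) → ℂ)) :
    FormAlg n →ₗ[ℂ] FormAlg n :=
  CliffordAlgebra.contractLeft D

/-! ### Contractions of `Ω` -/

section contraction

variable {n : ℕ} (D : Module.Dual ℂ ((Fin n ⊕ Fin n) → ℂ)) (G H : Fin n → Fin n → ℂ)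

lemma contr_dzf_mul (j : Fin n) (x : FormAlg n) :
    contr D (dzf j * x) = D (Pi.single (Sum.inl j) 1) • x - dzf j * contr D x :=
  CliffordAlgebra.contractLeft_ι_mul ..

lemma contr_dzbf_mul (j : Fin n) (x : FormAlg n) :
    contr D (dzbf j * x) = D (Pi.single (Sum.inr j) 1) • x - dzbf j * contr D x :=
  CliffordAlgebra.contractLeft_ι_mul ..

lemma contr_one : contr D 1 = 0 := CliffordAlgebra.contractLeft_one ..

lemma dualHol_inl (k a : Fin n) : dualHol H k (Pi.single (Sum.inl a) 1) = H a k := by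
  simp [dualHol, Pi.single_apply]

lemma dualHol_inr (k a : Fin n) : dualHol H k (Pi.single (Sum.inr a) 1) = 0 := by
  simp [dualHol]

lemma dualAnti_inl (k a : Fin n) : dualAnti H k (Pi.single (Sum.inl a) 1) = 0 := by
  simp [dualAnti]

lemma dualAnti_inr (k a : Fin n) : dualAnti H k (Pi.single (Sum.inr a) 1) = H k a := by
  simp [dualAnti, Pi.single_apply]

/-- Since `Ω` has even degree, contraction satisfies the unsigned Leibniz rule on `Ω ∧ x`. -/
lemma contr_rawOmega_mul (x : FormAlg n) :
    contr D (rawOmega G * x) =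
      (∑ j : Fin n, ∑ k : Fin n, G k j • (D (Pi.single (Sum.inl j) 1) • dzbf k
        - D (Pi.single (Sum.inr k) 1) • dzf j)) * x + rawOmega G * contr D x := by
  simp only [rawOmega, Finset.sum_mul, map_sum, ← Finset.sum_add_distrib, smul_mul_assoc,
    map_smul, mul_assoc, contr_dzf_mul, contr_dzbf_mul, sub_mul, ← smul_add]
  refine Finset.sum_congr rfl fun j _ => Finset.sum_congr rfl fun k _ => ?_
  rw [mul_sub, mul_smul_comm, sub_sub_eq_add_sub, sub_add_eq_add_sub]

lemma contr_dualHol_rawOmega_mul (hr : ∀ p q, ∑ l, G p l * H l q = if p = q then 1 else 0)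
    (a : Fin n) (x : FormAlg n) :
    contr (dualHol H a) (rawOmega G * x) = dzbf a * x + rawOmega G * contr (dualHol H a) x := by
  rw [contr_rawOmega_mul, Finset.sum_comm]
  simp [dualHol_inl, dualHol_inr, smul_smul, ← Finset.sum_smul, hr]

lemma contr_dualAnti_rawOmega_mul (hl : ∀ p q, ∑ l, H p l * G l q = if p = q then 1 else 0)
    (a : Fin n) (x : FormAlg n) :
    contr (dualAnti H a) (rawOmega G * x) =
      -(dzf a * x) + rawOmega G * contr (dualAnti H a) x := by
  rw [contr_rawOmega_mul]
  have hl' : ∀ q, ∑ l, G l q * H a l = if a = q then 1 else 0 := fun q => by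
    rw [← hl]; exact Finset.sum_congr rfl fun _ _ => mul_comm _ _
  simp [dualAnti_inl, dualAnti_inr, smul_smul, ← Finset.sum_smul, hl']

end contraction

/-! ### Commutation relations and nilpotency of `Ω` -/

section relations

variable {n : ℕ}

lemma dzbf_mul_dzf (a b : Fin n) : (dzbf a * dzf b : FormAlg n) = -(dzf b * dzbf a) :=
  eq_neg_of_add_eq_zero_left (ExteriorAlgebra.ι_add_mul_swap _ _)

lemma ι_commute_ι_mul_ι (u v w : (Fin n ⊕ Fin n) → ℂ) :
    Commute (ExteriorAlgebra.ι ℂ u) (ExteriorAlgebra.ι ℂ v * ExteriorAlgebra.ι ℂ w) := by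
  have h1 := eq_neg_of_add_eq_zero_left (ExteriorAlgebra.ι_add_mul_swap (R := ℂ) u v)
  have h2 := eq_neg_of_add_eq_zero_left (ExteriorAlgebra.ι_add_mul_swap (R := ℂ) u w)
  rw [Commute, SemiconjBy, ← mul_assoc, h1, neg_mul, mul_assoc, h2, mul_neg, neg_neg, mul_assoc]

lemma commute_rawOmega (G : Fin n → Fin n → ℂ) (u : (Fin n ⊕ Fin n) → ℂ) :
    Commute (ExteriorAlgebra.ι ℂ u) (rawOmega G) :=
  Commute.sum_right _ _ _ fun _ _ => Commute.sum_right _ _ _ fun _ _ =>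
    (ι_commute_ι_mul_ι _ _ _).smul_right _

lemma dzbf_commute (G : Fin n → Fin n → ℂ) (k : Fin n) (m : ℕ) :
    Commute (dzbf k) (rawOmega G ^ m) := (commute_rawOmega G _).pow_right m

lemma sum_pow_card_succ_eq_zero {A ι : Type*} [Ring A] [DecidableEq ι] (w : ι → A)
    (hw : ∀ i, w i ^ 2 = 0) (hc : ∀ i j, Commute (w i) (w j)) (s : Finset ι) :
    (∑ i ∈ s, w i) ^ (s.card + 1) = 0 := by
  induction s using Finset.induction_on with
  | empty => simp
  | insert a s ha ih =>
    rw [Finset.sum_insert ha, Finset.card_insert_of_notMem ha]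
    exact (Commute.sum_right _ _ _ fun i _ => hc a i).add_pow_eq_zero_of_add_le_succ_of_pow_eq_zero
      (hw a) ih (by omega)

/-- `Ω` is the sum of the `n` commuting square-zero two-forms `θ_k ∧ dz̄^k`, hence `Ω^{n+1} = 0`. -/
lemma rawOmega_pow_succ_eq_zero (G : Fin n → Fin n → ℂ) : rawOmega G ^ (n + 1) = 0 := by
  have h : rawOmega G = ∑ k : Fin n,
      ExteriorAlgebra.ι ℂ (∑ j : Fin n, G k j • Pi.single (Sum.inl j) 1) * dzbf k := by
    rw [rawOmega, Finset.sum_comm]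
    simp [Finset.sum_mul, dzf]
  have h2 := sum_pow_card_succ_eq_zero (fun k : Fin n =>
      (ExteriorAlgebra.ι ℂ (∑ j : Fin n, G k j • Pi.single (Sum.inl j) 1) * dzbf k : FormAlg n))
      (fun k => ?_) (fun i j => ?_) Finset.univ
  · simpa [h] using h2
  · rw [sq, dzbf, mul_assoc, (ι_commute_ι_mul_ι _ _ _).eq, mul_assoc (ExteriorAlgebra.ι ℂ _),
      ExteriorAlgebra.ι_sq_zero, mul_zero, mul_zero]
  · exact (ι_commute_ι_mul_ι _ _ _).mul_left (ι_commute_ι_mul_ι _ _ _)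

end relations

/-! ### Trace identities for forms wedged with powers of `Ω` -/

section lefschetz

variable {n : ℕ} {G H : Fin n → Fin n → ℂ}

lemma contr_dualHol_pow (hr : ∀ p q, ∑ l, G p l * H l q = if p = q then 1 else 0)
    (a : Fin n) (m : ℕ) :
    contr (dualHol H a) (rawOmega G ^ (m + 1)) =
      ((m : ℂ) + 1) • (dzbf a * rawOmega G ^ m) := by
  induction m with
  | zero =>
    have h := contr_dualHol_rawOmega_mul G H hr a 1
    simpa [contr_one] using h
  | succ m ih =>
    rw [pow_succ', contr_dualHol_rawOmega_mul G H hr, ih, mul_smul_comm, ← mul_assoc,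
      ← (show dzbf a * rawOmega G = rawOmega G * dzbf a from commute_rawOmega G _), mul_assoc, ← pow_succ']
    push_cast
    module

lemma contr_dualAnti_pow (hl : ∀ p q, ∑ l, H p l * G l q = if p = q then 1 else 0)
    (a : Fin n) (m : ℕ) :
    contr (dualAnti H a) (rawOmega G ^ (m + 1)) =
      -(((m : ℂ) + 1) • (dzf a * rawOmega G ^ m)) := by
  induction m with
  | zero =>
    have h := contr_dualAnti_rawOmega_mul G H hl a 1
    simpa [contr_one] using h
  | succ m ih =>
    rw [pow_succ', contr_dualAnti_rawOmega_mul G H hl, ih, mul_neg, mul_smul_comm, ← mul_assoc,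
      ← (show dzf a * rawOmega G = rawOmega G * dzf a from commute_rawOmega G _), mul_assoc, ← pow_succ']
    push_cast
    module

/-- The contraction of `Ω^{n+1} = 0` by `dualAnti H a`. -/
lemma dzf_mul_pow (hl : ∀ p q, ∑ l, H p l * G l q = if p = q then 1 else 0)
    (a : Fin n) : dzf a * rawOmega G ^ n = 0 := by
  have h := contr_dualAnti_pow hl a n
  rw [rawOmega_pow_succ_eq_zero, map_zero, eq_comm, neg_eq_zero] at h
  exact (smul_eq_zero.1 h).resolve_left (by exact_mod_cast n.succ_ne_zero)

/-- The contraction of `dz^a ∧ Ω^n = 0` by `dualAnti H b`. -/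
lemma dzf_dzf_mul_pow (hl : ∀ p q, ∑ l, H p l * G l q = if p = q then 1 else 0)
    {m : ℕ} (hm : n = m + 1) (a b : Fin n) : dzf a * (dzf b * rawOmega G ^ m) = 0 := by
  have h := congrArg (contr (dualAnti H b)) (dzf_mul_pow hl a)
  rw [congrArg (rawOmega G ^ ·) hm, map_zero, contr_dzf_mul, dualAnti_inl, zero_smul, zero_sub,
    contr_dualAnti_pow hl, mul_neg, neg_neg, mul_smul_comm] at h
  exact (smul_eq_zero.1 h).resolve_left (by exact_mod_cast m.succ_ne_zero)

/-- The contraction of `dz^a ∧ dz^b ∧ Ω^{n-1} = 0` by `dualAnti H c`. -/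
lemma dzf_dzf_dzf_mul_pow (hl : ∀ p q, ∑ l, H p l * G l q = if p = q then 1 else 0)
    {m : ℕ} (hm : n = m + 2) (a b c : Fin n) :
    dzf a * (dzf b * (dzf c * rawOmega G ^ m)) = 0 := by
  have h := congrArg (contr (dualAnti H c)) (dzf_dzf_mul_pow hl (m := m + 1) hm a b)
  rw [map_zero, contr_dzf_mul, dualAnti_inl, zero_smul, zero_sub, contr_dzf_mul, dualAnti_inl,
    zero_smul, zero_sub, contr_dualAnti_pow hl, mul_neg, mul_neg, mul_neg, neg_neg, mul_smul_comm,
    mul_smul_comm, neg_eq_zero] at h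
  exact (smul_eq_zero.1 h).resolve_left (by exact_mod_cast m.succ_ne_zero)

/-- The contraction of `dz^a ∧ Ω^n = 0` by `dualHol H k`. -/
lemma trace_one (hl : ∀ p q, ∑ l, H p l * G l q = if p = q then 1 else 0)
    (hr : ∀ p q, ∑ l, G p l * H l q = if p = q then 1 else 0)
    {m : ℕ} (hm : n = m + 1) (a k : Fin n) :
    ((m : ℂ) + 1) • (dzf a * (dzbf k * rawOmega G ^ m)) = H a k • rawOmega G ^ (m + 1) := by
  have h := congrArg (contr (dualHol H k)) (dzf_mul_pow hl a)
  rw [congrArg (rawOmega G ^ ·) hm, map_zero, contr_dzf_mul, dualHol_inl,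
    contr_dualHol_pow hr, mul_smul_comm, sub_eq_zero] at h
  exact h.symm

/-- The contraction of `dz^a ∧ dz^b ∧ Ω^{n-1} = 0` by `dualHol H k`. -/
lemma trace_two (hl : ∀ p q, ∑ l, H p l * G l q = if p = q then 1 else 0)
    (hr : ∀ p q, ∑ l, G p l * H l q = if p = q then 1 else 0)
    {m : ℕ} (hm : n = m + 2) (a b k : Fin n) :
    ((m : ℂ) + 1) • (dzf a * (dzf b * (dzbf k * rawOmega G ^ m))) =
      H b k • (dzf a * rawOmega G ^ (m + 1)) - H a k • (dzf b * rawOmega G ^ (m + 1)) := by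
  have h := congrArg (contr (dualHol H k)) (dzf_dzf_mul_pow hl (m := m + 1) hm a b)
  rw [map_zero, contr_dzf_mul, contr_dzf_mul, dualHol_inl, dualHol_inl,
    contr_dualHol_pow hr, mul_sub, mul_smul_comm, mul_smul_comm, mul_smul_comm] at h
  rw [← sub_eq_zero, ← h]
  abel

/-- The contraction of `dz^a ∧ dz^b ∧ dz^c ∧ Ω^{n-2} = 0` by `dualHol H k`. -/
lemma trace_three (hl : ∀ p q, ∑ l, H p l * G l q = if p = q then 1 else 0)
    (hr : ∀ p q, ∑ l, G p l * H l q = if p = q then 1 else 0)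
    {m : ℕ} (hm : n = m + 3) (a b c k : Fin n) :
    ((m : ℂ) + 1) • (dzf a * (dzf b * (dzf c * (dzbf k * rawOmega G ^ m)))) =
      H a k • (dzf b * (dzf c * rawOmega G ^ (m + 1)))
        - H b k • (dzf a * (dzf c * rawOmega G ^ (m + 1)))
        + H c k • (dzf a * (dzf b * rawOmega G ^ (m + 1))) := by
  have h := congrArg (contr (dualHol H k)) (dzf_dzf_dzf_mul_pow hl (m := m + 1) hm a b c)
  rw [map_zero, contr_dzf_mul, contr_dzf_mul, contr_dzf_mul, dualHol_inl, dualHol_inl, dualHol_inl,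
    contr_dualHol_pow hr, mul_sub, mul_sub, mul_sub, mul_smul_comm, mul_smul_comm, mul_smul_comm,
    mul_smul_comm, mul_smul_comm, mul_smul_comm] at h
  rw [← sub_eq_zero, ← neg_eq_zero, ← h]
  abel

/-- The wedge of a basic `(3,3)`-form with `Ω^{n-3}` is, up to the factor `n(n-1)(n-2)`, the
`3 × 3` determinant of inverse metric entries times `Ω^n`. -/
lemma trace_full (hl : ∀ p q, ∑ l, H p l * G l q = if p = q then 1 else 0)
    (hr : ∀ p q, ∑ l, G p l * H l q = if p = q then 1 else 0)
    {N : ℕ} (hm : n = N + 3) (k j l m i p : Fin n) :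
    (((N : ℂ) + 3) * ((N : ℂ) + 2) * ((N : ℂ) + 1)) •
      ((dzf l * dzf j * dzbf k) * (dzbf p * dzbf i * dzf m) * rawOmega G ^ N) =
    (H l k * (H j p * H m i - H m p * H j i) - H j k * (H l p * H m i - H m p * H l i)
      + H m k * (H l p * H j i - H j p * H l i)) • rawOmega G ^ (N + 3) := by
  have h1 : ∀ a b : Fin n, ((N : ℂ) + 3) • (dzf a * rawOmega G ^ (N + 2) * dzbf b) =
      H a b • rawOmega G ^ (N + 3) := fun a b => by
    have h := trace_one hl hr (m := N + 2) hm a b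
    rw [(dzbf_commute G b _).eq, ← mul_assoc] at h
    rw [← h]; push_cast; congr 1; ring
  have h2 : ∀ a b c d : Fin n, (((N : ℂ) + 3) * ((N : ℂ) + 2)) •
      (dzf a * (dzf b * rawOmega G ^ (N + 1)) * (dzbf c * dzbf d)) =
      (H b c * H a d - H a c * H b d) • rawOmega G ^ (N + 3) := fun a b c d => by
    have h := congrArg (· * dzbf d) (trace_two hl hr (m := N + 1) hm a b c)
    simp only [sub_mul, smul_mul_assoc] at h
    rw [(dzbf_commute G c _).eq] at h
    have e : ((N : ℂ) + 2) • (dzf a * (dzf b * rawOmega G ^ (N + 1)) * (dzbf c * dzbf d)) =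
      H b c • (dzf a * rawOmega G ^ (N + 2) * dzbf d)
        - H a c • (dzf b * rawOmega G ^ (N + 2) * dzbf d) := by
      rw [← h]; push_cast; simp only [mul_assoc]; congr 1; ring
    rw [mul_smul, e, smul_sub, smul_comm _ (H b c), smul_comm _ (H a c), h1, h1]
    module
  have h3 := congrArg (· * (dzbf p * dzbf i)) (trace_three hl hr hm l j m k)
  simp only [sub_mul, add_mul, smul_mul_assoc] at h3
  have e : (dzf l * dzf j * dzbf k) * (dzbf p * dzbf i * dzf m) * rawOmega G ^ N =
      -(dzf l * (dzf j * (dzf m * (dzbf k * rawOmega G ^ N))) * (dzbf p * dzbf i)) := by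
    have e1 : (dzbf k * (dzbf p * (dzbf i * dzf m)) : FormAlg n) =
        -(dzf m * (dzbf k * (dzbf p * dzbf i))) := by
      rw [dzbf_mul_dzf i m, mul_neg, ← mul_assoc (dzbf p), dzbf_mul_dzf p m, neg_mul, neg_neg,
        mul_assoc, ← mul_assoc (dzbf k), dzbf_mul_dzf k m, neg_mul, mul_assoc]
    have e2 : (dzf l * dzf j * dzbf k) * (dzbf p * dzbf i * dzf m) * rawOmega G ^ N =
        dzf l * (dzf j * (dzbf k * (dzbf p * (dzbf i * dzf m)))) * rawOmega G ^ N := by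
      simp only [mul_assoc]
    have e3 : rawOmega G ^ N * (dzbf p * dzbf i) = (dzbf p * dzbf i) * rawOmega G ^ N :=
      ((dzbf_commute G p N).mul_left (dzbf_commute G i N)).eq.symm
    rw [e2, e1]
    simp only [mul_neg, neg_mul, mul_assoc, e3]
  -- `h3` removes `dz̄^k`; `h2`, applied to each of its three terms, removes the remaining two pairs.
  rw [e, smul_neg, mul_smul, h3, smul_add, smul_sub, smul_comm _ (H l k), smul_comm _ (H j k),
    smul_comm _ (H m k), h2, h2, h2]
  module

end lefschetz

/-! ### Sums over index pairs -/

section sums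

variable {ι : Type*} [Fintype ι]

lemma sum_rotate_three (F : ι → ι → ι → ℂ) :
    ∑ a, ∑ b, ∑ c, F a b c = ∑ c, ∑ a, ∑ b, F a b c :=
  (Finset.sum_congr rfl fun _ _ => Finset.sum_comm).trans Finset.sum_comm

lemma sum_rotate_four (F : ι → ι → ι → ι → ℂ) :
    ∑ a, ∑ b, ∑ c, ∑ d, F a b c d = ∑ d, ∑ a, ∑ b, ∑ c, F a b c d :=
  (Finset.sum_congr rfl fun _ _ => sum_rotate_three _).trans Finset.sum_comm

lemma sum_rotate_five (F : ι → ι → ι → ι → ι → ℂ) :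
    ∑ a, ∑ b, ∑ c, ∑ d, ∑ e, F a b c d e = ∑ e, ∑ a, ∑ b, ∑ c, ∑ d, F a b c d e :=
  (Finset.sum_congr rfl fun _ _ => sum_rotate_four _).trans Finset.sum_comm

lemma sum_swap_pairs (F : ι → ι → ι → ι → ℂ) :
    ∑ a, ∑ b, ∑ c, ∑ d, F a b c d = ∑ c, ∑ d, ∑ a, ∑ b, F a b c d :=
  (sum_rotate_four _).trans <| (sum_rotate_four _).trans rfl

/-- A sum over three pairs of indices, each pair being contracted by one factor of the inverse
metric.  Summands may be relabelled by permuting the pairs. -/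
def sumPairs (F : ι → ι → ι → ι → ι → ι → ℂ) : ℂ :=
  ∑ a, ∑ b, ∑ c, ∑ d, ∑ e, ∑ f, F a b c d e f

lemma sumPairs_swap_left (F : ι → ι → ι → ι → ι → ι → ℂ) :
    sumPairs (fun a b c d e f => F c d a b e f) = sumPairs F :=
  sum_swap_pairs _

lemma sumPairs_swap_right (F : ι → ι → ι → ι → ι → ι → ℂ) :
    sumPairs (fun a b c d e f => F a b e f c d) = sumPairs F :=
  Finset.sum_congr rfl fun _ _ => Finset.sum_congr rfl fun _ _ => sum_swap_pairs _

lemma sumPairs_cycle (F : ι → ι → ι → ι → ι → ι → ℂ) :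
    sumPairs (fun a b c d e f => F c d e f a b) = sumPairs F :=
  (sumPairs_swap_left (fun a b c d e f => F a b e f c d)).trans (sumPairs_swap_right F)

lemma sumPairs_cycle' (F : ι → ι → ι → ι → ι → ι → ℂ) :
    sumPairs (fun a b c d e f => F e f a b c d) = sumPairs F :=
  (sumPairs_cycle (fun a b c d e f => F c d e f a b)).trans (sumPairs_cycle F)

lemma sumPairs_swap_outer (F : ι → ι → ι → ι → ι → ι → ℂ) :
    sumPairs (fun a b c d e f => F e f c d a b) = sumPairs F :=
  (sumPairs_swap_left (fun a b c d e f => F e f a b c d)).trans (sumPairs_cycle' F)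

variable (h : ι → ι → ℂ) (T S : ι → ι → ι → ℂ)

/-- The summand of `|T|²`, the pairs contracted by `h` being `(a,b)`, `(c,d)`, `(e,f)`; here `S`
stands for `T̄`. -/
def normTerm (a b c d e f : ι) : ℂ := h a b * h c d * h e f * T b c e * S a d f

/-- The summand of `|τ|²`: `(c,d)` and `(e,f)` are the pairs traced inside `T` and `S = T̄`, and
`(a,b)` contracts the two resulting one-forms. -/
def tauTerm (a b c d e f : ι) : ℂ := h a b * h c d * h e f * T d c a * S e f b

variable {T S}

/-- Of the nine terms of `(T∧T̄)_{p̄qr̄sk̄j}`, three have trace `|T|²` and six have trace `-|τ|²`. -/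
lemma sum_trace_components (hT : ∀ k j l, T k j l = -T k l j) (hS : ∀ k j l, S k j l = -S k l j) :
    sumPairs (fun j k q p s r => h j k * h q p * h s r *
      (T k s j * S q p r + T r s j * S q k p + T p s j * S q r k
        + T k q s * S j p r + T r q s * S j k p + T p q s * S j r k
        + T k j q * S s p r + T r j q * S s k p + T p j q * S s r k)) =
      3 * (sumPairs (normTerm h T S) - 2 * sumPairs (tauTerm h T S)) := by
  have e : ∀ j k q p s r, h j k * h q p * h s r *
      (T k s j * S q p r + T r s j * S q k p + T p s j * S q r k
        + T k q s * S j p r + T r q s * S j k p + T p q s * S j r k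
        + T k j q * S s p r + T r j q * S s k p + T p j q * S s r k) =
      normTerm h T S j k q p s r + normTerm h T S q p s r j k + normTerm h T S s r j k q p
      - tauTerm h T S j k q p s r - tauTerm h T S q p s r j k - tauTerm h T S s r j k q p
      - tauTerm h T S j k s r q p - tauTerm h T S q p j k s r - tauTerm h T S s r q p j k := by
    intro j k q p s r
    simp only [normTerm, tauTerm]
    rw [hT k s j, hS q k p, hT r q s, hS j r k, hS s p r, hT p j q]
    ring
  have d : sumPairs (fun j k q p s r =>
      normTerm h T S j k q p s r + normTerm h T S q p s r j k + normTerm h T S s r j k q p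
      - tauTerm h T S j k q p s r - tauTerm h T S q p s r j k - tauTerm h T S s r j k q p
      - tauTerm h T S j k s r q p - tauTerm h T S q p j k s r - tauTerm h T S s r q p j k) =
      sumPairs (normTerm h T S) + sumPairs (fun j k q p s r => normTerm h T S q p s r j k)
      + sumPairs (fun j k q p s r => normTerm h T S s r j k q p)
      - sumPairs (tauTerm h T S) - sumPairs (fun j k q p s r => tauTerm h T S q p s r j k)
      - sumPairs (fun j k q p s r => tauTerm h T S s r j k q p)
      - sumPairs (fun j k q p s r => tauTerm h T S j k s r q p)
      - sumPairs (fun j k q p s r => tauTerm h T S q p j k s r)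
      - sumPairs (fun j k q p s r => tauTerm h T S s r q p j k) := by
    simp only [sumPairs, Finset.sum_add_distrib, Finset.sum_sub_distrib]
  simp only [e]
  rw [d, sumPairs_cycle (normTerm h T S), sumPairs_cycle' (normTerm h T S),
    sumPairs_cycle (tauTerm h T S), sumPairs_cycle' (tauTerm h T S),
    sumPairs_swap_right (tauTerm h T S), sumPairs_swap_left (tauTerm h T S),
    sumPairs_swap_outer (tauTerm h T S)]
  ring

lemma sum_normTerm (T S : ι → ι → ι → ℂ) :
    ∑ k, ∑ j, ∑ l, ∑ m, ∑ i, ∑ p, normTerm h T S m k j i l p = sumPairs (normTerm h T S) :=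
  (sum_rotate_four _).trans <| Finset.sum_congr rfl fun _ _ => Finset.sum_congr rfl fun _ _ =>
    Finset.sum_congr rfl fun _ _ => Finset.sum_comm

lemma sum_tauTerm (T S : ι → ι → ι → ℂ) :
    ∑ k, ∑ j, ∑ l, ∑ m, ∑ i, ∑ p, tauTerm h T S l p j k m i = sumPairs (tauTerm h T S) :=
  (sum_rotate_three _).trans <| Finset.sum_congr rfl fun _ _ => (sum_rotate_five _).trans <|
    Finset.sum_congr rfl fun _ _ => Finset.sum_comm

/-- Contracting `T ⊗ T̄` with the determinant of `trace_full`: two of the six terms give `|T|²` and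
the other four give `-|τ|²`. -/
lemma sum_full_contraction (hT : ∀ k j l, T k j l = -T k l j)
    (hS : ∀ k j l, S k j l = -S k l j) :
    ∑ k, ∑ j, ∑ l, ∑ m, ∑ i, ∑ p, T k j l * S m i p *
      (h l k * (h j p * h m i - h m p * h j i) - h j k * (h l p * h m i - h m p * h l i)
        + h m k * (h l p * h j i - h j p * h l i)) =
      2 * (sumPairs (normTerm h T S) - 2 * sumPairs (tauTerm h T S)) := by
  have e : ∀ k j l m i p, T k j l * S m i p *
      (h l k * (h j p * h m i - h m p * h j i) - h j k * (h l p * h m i - h m p * h l i)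
        + h m k * (h l p * h j i - h j p * h l i)) =
      normTerm h T S m k j i l p + normTerm h T S m k l i j p
      - tauTerm h T S l p j k m i - tauTerm h T S j p l k m i
      - tauTerm h T S l i j k m p - tauTerm h T S j i l k m p := by
    intro k j l m i p
    simp only [normTerm, tauTerm]
    rw [hT k l j, hS m p i]
    ring
  -- The sums are invariant under swapping `j` and `l`, and under swapping `i` and `p`.
  have s1 : ∀ F : ι → ι → ι → ι → ι → ι → ℂ, ∑ k, ∑ j, ∑ l, ∑ m, ∑ i, ∑ p, F k l j m i p =
      ∑ k, ∑ j, ∑ l, ∑ m, ∑ i, ∑ p, F k j l m i p := fun F =>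
    Finset.sum_congr rfl fun _ _ => Finset.sum_comm
  have s2 : ∀ F : ι → ι → ι → ι → ι → ι → ℂ, ∑ k, ∑ j, ∑ l, ∑ m, ∑ i, ∑ p, F k j l m p i =
      ∑ k, ∑ j, ∑ l, ∑ m, ∑ i, ∑ p, F k j l m i p := fun F =>
    Finset.sum_congr rfl fun _ _ => Finset.sum_congr rfl fun _ _ => Finset.sum_congr rfl fun _ _ =>
      Finset.sum_congr rfl fun _ _ => Finset.sum_comm
  simp only [e, Finset.sum_add_distrib, Finset.sum_sub_distrib]
  rw [s1 fun k j l m i p => normTerm h T S m k j i l p,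
    s1 fun k j l m i p => tauTerm h T S l p j k m i,
    s2 fun k j l m i p => tauTerm h T S l p j k m i,
    s1 fun k j l m i p => tauTerm h T S l i j k m p,
    s2 fun k j l m i p => tauTerm h T S l p j k m i, sum_normTerm, sum_tauTerm]
  ring

end sums

/-! ### The torsion norms as sums over index pairs -/

section metric

variable {n : ℕ} {g ginv : Fin n → Fin n → (Fin n → ℂ) → ℂ}

lemma torsion_antisymm (g : Fin n → Fin n → (Fin n → ℂ) → ℂ) (z : Fin n → ℂ) (k j l : Fin n) :
    torsion g k j l z = -torsion g k l j z := by
  simp only [torsion, neg_sub]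

lemma torsionBar_antisymm (g : Fin n → Fin n → (Fin n → ℂ) → ℂ) (z : Fin n → ℂ)
    (k j l : Fin n) : torsionBar g k j l z = -torsionBar g k l j z := by
  simp only [torsionBar]
  rw [torsion_antisymm, map_neg]

/-- The inverse of a Hermitian matrix is Hermitian: `A⁻¹` and its adjoint are a left and a right
inverse of `A = A^*`. -/
lemma conj_ginv (hg : IsHermitianMetric g ginv) (z : Fin n → ℂ) (j k : Fin n) :
    starRingEnd ℂ (ginv j k z) = ginv k j z := by
  let A : Matrix (Fin n) (Fin n) ℂ := Matrix.of fun a b => g a b z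
  let B : Matrix (Fin n) (Fin n) ℂ := Matrix.of fun a b => ginv a b z
  have hA : A.conjTranspose = A := by
    ext a b; exact hg.hermitian b a z
  have hBA : B * A = 1 := by
    ext a b; simpa [A, B, Matrix.mul_apply, Matrix.one_apply] using hg.inv_left z a b
  have hAB : A * B.conjTranspose = 1 := by
    have := congrArg Matrix.conjTranspose hBA
    rwa [Matrix.conjTranspose_mul, hA, Matrix.conjTranspose_one] at this
  have hB := left_inv_eq_right_inv hBA hAB
  exact (congrFun (congrFun hB k) j).symm

lemma torsionNormSq_eq (g ginv : Fin n → Fin n → (Fin n → ℂ) → ℂ) (z : Fin n → ℂ) :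
    torsionNormSq g ginv z = sumPairs (normTerm (fun a b => ginv a b z)
      (fun k j l => torsion g k j l z) (fun k j l => torsionBar g k j l z)) := by
  rw [← sum_normTerm]
  rfl

/-- The components `T̄_{p̄} = g^{mī} T̄_{mīp̄}` of `τ̄`. -/
lemma conj_tau (hg : IsHermitianMetric g ginv) (z : Fin n → ℂ) (p : Fin n) :
    starRingEnd ℂ (tau g ginv p z) =
      ∑ m : Fin n, ∑ i : Fin n, ginv m i z * torsionBar g m i p z := by
  simp only [tau, map_sum, map_mul, conj_ginv hg]
  exact Finset.sum_comm

lemma tauNormSq_eq (hg : IsHermitianMetric g ginv) (z : Fin n → ℂ) :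
    tauNormSq g ginv z = sumPairs (tauTerm (fun a b => ginv a b z)
      (fun k j l => torsion g k j l z) (fun k j l => torsionBar g k j l z)) := by
  simp only [tauNormSq, conj_tau hg]
  simp only [tau, sumPairs, tauTerm, Finset.mul_sum, Finset.sum_mul]
  refine Finset.sum_congr rfl fun a _ => Finset.sum_congr rfl fun b _ => ?_
  refine (sum_swap_pairs _).trans ?_
  refine Finset.sum_congr rfl fun c _ => Finset.sum_congr rfl fun d _ =>
    Finset.sum_congr rfl fun e _ => Finset.sum_congr rfl fun f _ => ?_
  ring

end metric

/-! ### The identity -/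

/-- Let `ω = i g_{k̄j} dz^j∧dz̄^k` be a Hermitian metric on a complex
manifold of dimension `n ≥ 3`, with torsion `T = i∂ω`, `T̄ = −i∂̄ω`, torsion one-form
`τ`, and norms `|T|²`, `|τ|²`.  Then, at every point,
`T ∧ T̄ ∧ ω^{n-3} = (i/2)·(1/(n(n−1)(n−2)))·(|T|² − 2|τ|²)·ω^n`.
Moreover, the full traces of the `(3,3)`-form `T∧T̄` satisfy
`g^{jk̄} g^{qp̄} g^{sr̄} (T∧T̄)_{p̄qr̄sk̄j} = 3(|T|² − 2|τ|²)`. -/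
theorem torsion_wedge_torsion_bar_identity
    {n : ℕ} (hn : 3 ≤ n) (g ginv : Fin n → Fin n → (Fin n → ℂ) → ℂ)
    (hg : IsHermitianMetric g ginv) (z : Fin n → ℂ) :
    torsionForm g z * torsionBarForm g z * omegaForm g z ^ (n - 3) =
      ((Complex.I / 2) * (((n : ℂ) * ((n : ℂ) - 1) * ((n : ℂ) - 2)))⁻¹ *
        (torsionNormSq g ginv z - 2 * tauNormSq g ginv z)) • omegaForm g z ^ n ∧
    ∑ j : Fin n, ∑ k : Fin n, ∑ q : Fin n, ∑ p : Fin n, ∑ s : Fin n, ∑ r : Fin n,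
        ginv j k z * ginv q p z * ginv s r z * torsionWedgeBar g p q r s k j z =
      3 * (torsionNormSq g ginv z - 2 * tauNormSq g ginv z) := by
  have hT := torsion_antisymm g z
  have hS := torsionBar_antisymm g z
  rw [torsionNormSq_eq, tauNormSq_eq hg]
  refine ⟨?_, sum_trace_components _ hT hS⟩
  obtain ⟨N, hN⟩ : ∃ N, n = N + 3 := ⟨n - 3, by omega⟩
  have hc := sum_full_contraction (fun a b => ginv a b z) hT hS
  set X := sumPairs (normTerm (fun a b => ginv a b z)
      (fun k j l => torsion g k j l z) (fun k j l => torsionBar g k j l z)) -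
    2 * sumPairs (tauTerm (fun a b => ginv a b z)
      (fun k j l => torsion g k j l z) (fun k j l => torsionBar g k j l z)) with hX
  set Ω : FormAlg n := rawOmega (fun a b => g a b z) with hΩ
  have homega : omegaForm g z = Complex.I • Ω := rfl
  set c : ℂ := ((N : ℂ) + 3) * ((N : ℂ) + 2) * ((N : ℂ) + 1) with hcdef
  have hc0 : c ≠ 0 := by
    rw [hcdef]; exact_mod_cast (by positivity : (N + 3) * (N + 2) * (N + 1) ≠ 0)
  -- The identity for `Ω = -iω`; the powers of `i` are restored at the end.
  have key : c • (torsionForm g z * torsionBarForm g z * Ω ^ N) = (X / 2) • Ω ^ (N + 3) := by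
    have expand : torsionForm g z * torsionBarForm g z * Ω ^ N = (4 : ℂ)⁻¹ •
        ∑ k, ∑ j, ∑ l, ∑ m, ∑ i, ∑ p, (torsion g k j l z * torsionBar g m i p z) •
          ((dzf l * dzf j * dzbf k) * (dzbf p * dzbf i * dzf m) * Ω ^ N) := by
      have inv4 : (4 : ℂ)⁻¹ = 2⁻¹ * 2⁻¹ := by norm_num
      rw [inv4, mul_smul, torsionForm, torsionBarForm, smul_mul_assoc, smul_mul_assoc,
        mul_smul_comm, smul_mul_assoc]
      congr 2
      simp only [Finset.sum_mul]
      simp only [Finset.mul_sum, Finset.sum_mul, smul_mul_assoc, mul_smul_comm, smul_smul]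
      simp only [mul_comm (torsionBar g _ _ _ z)]
    have term : ∀ k j l m i p, c • ((torsion g k j l z * torsionBar g m i p z) •
          ((dzf l * dzf j * dzbf k) * (dzbf p * dzbf i * dzf m) * Ω ^ N)) = _ :=
      fun k j l m i p => (smul_comm _ _ _).trans <| congrArg _ <|
        trace_full (hg.inv_left z) (hg.inv_right z) hN k j l m i p
    rw [expand, smul_comm]
    simp only [Finset.smul_sum (r := c), term, smul_smul (M := ℂ) (α := FormAlg n),
      ← Finset.sum_smul]
    rw [hc]
    congr 1
    ring
  have hn3 : n - 3 = N := by omega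
  have hnc : (n : ℂ) * ((n : ℂ) - 1) * ((n : ℂ) - 2) = c := by
    rw [hN, hcdef]; push_cast; ring
  rw [hn3, hnc, homega, congrArg (fun t => (Complex.I • Ω) ^ t) hN, smul_pow, smul_pow,
    mul_smul_comm]
  have key' : torsionForm g z * torsionBarForm g z * Ω ^ N = (c⁻¹ * (X / 2)) • Ω ^ (N + 3) := by
    rw [mul_smul, ← key, inv_smul_smul₀ hc0]
  rw [key', smul_smul, smul_smul]
  congr 1
  rw [pow_add, Complex.I_pow_three]
  linear_combination (Complex.I ^ N * c⁻¹ * X / 2) * Complex.I_mul_I
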